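/- Let μ₁, ν₁, μ₂, ν₂ > 0, set r_k = √(μ_k ν_k), let θ > 0 satisfy θ·r₁·r₂ < 1, and let β > 0, c₁, c₂ be real constants. Then the covariance expression of the main theorem with p₁ = p₂ = 1, namely (4c₁/(β(iπ)²)) · ∮∮_{upper semicircles, radii r₁, r₂} log| (θ^{-1} − ζ₁ζ₂)/(θ^{-1} − ζ₁·conj(ζ₂)) | · (Im ζ₁/ζ₁)(Im ζ₂/ζ₂) dζ₁ dζ₂ + (4(c₂ − 1 − 2β^{-1}c₁)·θ/(πi)²) · ∮∮_{upper semicircles, radii r₁, r₂} ((Im ζ₁)²/ζ₁)·((Im ζ₂)²/ζ₂) dζ₁ dζ₂, equals 2·c₁·β^{-1}·θ·μ₁ν₁μ₂ν₂ + (c₂ − 1 − 2β^{-1}c₁)·θ·μ₁ν₁μ₂ν₂. -/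

import Mathlib

open Complex Real

/-- The iterated contour integral `∮∮ f(ζ₁,ζ₂) dζ₁ dζ₂` over upper semicircles of radii
`r₁` and `r₂` centered at the origin. -/
noncomputable def semicircleIntegral2 (f : ℂ → ℂ → ℂ) (r₁ r₂ : ℝ) : ℂ :=
  ∫ t₁ in (0 : ℝ)..π, ∫ t₂ in (0 : ℝ)..π,
    f ((r₁ : ℂ) * Complex.exp (Complex.I * t₁)) ((r₂ : ℂ) * Complex.exp (Complex.I * t₂)) *
      (Complex.I * r₁ * Complex.exp (Complex.I * t₁)) *
      (Complex.I * r₂ * Complex.exp (Complex.I * t₂))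

open MeasureTheory in
/-- Orthogonality of sines on `[0, π]` against the first mode. -/
lemma aux_sin_sin (n : ℕ) (hn : n ≠ 1) :
    ∫ t in (0 : ℝ)..π, Real.sin (n * t) * Real.sin t = 0 := by
  have h1 : ∀ t : ℝ, Real.sin (n * t) * Real.sin t
      = (1 / 2) * Real.cos (((n : ℝ) - 1) * t) - (1 / 2) * Real.cos (((n : ℝ) + 1) * t) := by
    intro t
    rw [sub_mul, add_mul, one_mul, Real.cos_sub, Real.cos_add]; ring
  have key : ∀ m : ℤ, m ≠ 0 → ∫ t in (0 : ℝ)..π, Real.cos ((m : ℝ) * t) = 0 := by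
    intro m hm
    have hm' : (m : ℝ) ≠ 0 := by exact_mod_cast hm
    rw [intervalIntegral.integral_comp_mul_left (fun x => Real.cos x) hm']
    simp [Real.sin_int_mul_pi]
  have k1 := key ((n : ℤ) - 1) (by omega)
  have k2 := key ((n : ℤ) + 1) (by omega)
  push_cast at k1 k2
  simp_rw [h1]
  rw [intervalIntegral.integral_sub
    (Continuous.intervalIntegrable (by fun_prop) _ _)
    (Continuous.intervalIntegrable (by fun_prop) _ _),
    intervalIntegral.integral_const_mul, intervalIntegral.integral_const_mul, k1, k2]
  simp

lemma aux_sin_sq : ∫ t in (0 : ℝ)..π, Real.sin t ^ 2 = π / 2 := by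
  rw [integral_sin_sq]; simp

/-- Fourier expansion of the logarithmic kernel. -/
lemma aux_hasSum (q : ℝ) (h0 : 0 < q) (h1 : q < 1) (s t : ℝ) :
    HasSum (fun n : ℕ => 2 * (q ^ n / n) * Real.sin (n * s) * Real.sin (n * t))
      (Real.log ‖(1 : ℂ) - q * Complex.exp (Complex.I * ((s + t : ℝ) : ℂ))‖
        - Real.log ‖(1 : ℂ) - q * Complex.exp (Complex.I * ((s - t : ℝ) : ℂ))‖) := by
  have key : ∀ x : ℝ, HasSum (fun n : ℕ => q ^ n / n * Real.cos (n * x))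
      (-Real.log ‖(1 : ℂ) - q * Complex.exp (Complex.I * (x : ℂ))‖) := by
    intro x
    have hn : ‖(q : ℂ) * Complex.exp (Complex.I * (x : ℂ))‖ < 1 := by
      rw [norm_mul, mul_comm Complex.I, Complex.norm_exp_ofReal_mul_I]
      simpa [abs_of_pos h0] using h1
    have := Complex.hasSum_re (Complex.hasSum_taylorSeries_neg_log hn)
    rw [Complex.neg_re, Complex.log_re] at this
    convert this using 2 with n
    rw [mul_pow, ← Complex.exp_nat_mul]
    have : (n : ℂ) * (Complex.I * (x : ℂ)) = ((n * x : ℝ) : ℂ) * Complex.I := by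
      push_cast; ring
    rw [this, ← Complex.ofReal_natCast n, ← Complex.ofReal_pow, mul_div_right_comm,
      ← Complex.ofReal_div, Complex.re_ofReal_mul, Complex.exp_ofReal_mul_I_re]
  convert (key (s - t)).sub (key (s + t)) using 1
  · rfl
  · funext n
    rw [mul_sub, mul_add, Real.cos_sub, Real.cos_add]; ring
  · ring

/-- The inner integral. -/
lemma aux_inner (q : ℝ) (h0 : 0 < q) (h1 : q < 1) (s : ℝ) :
    ∫ t in (0 : ℝ)..π,
      (Real.log ‖(1 : ℂ) - q * Complex.exp (Complex.I * ((s + t : ℝ) : ℂ))‖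
        - Real.log ‖(1 : ℂ) - q * Complex.exp (Complex.I * ((s - t : ℝ) : ℂ))‖) * Real.sin t
      = π * q * Real.sin s := by
  have H := intervalIntegral.hasSum_integral_of_dominated_convergence
    (μ := MeasureTheory.volume) (a := (0 : ℝ)) (b := π)
    (F := fun (n : ℕ) (t : ℝ) =>
      2 * (q ^ n / n) * Real.sin (n * s) * Real.sin (n * t) * Real.sin t)
    (f := fun t : ℝ => (Real.log ‖(1 : ℂ) - q * Complex.exp (Complex.I * ((s + t : ℝ) : ℂ))‖
        - Real.log ‖(1 : ℂ) - q * Complex.exp (Complex.I * ((s - t : ℝ) : ℂ))‖) * Real.sin t)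
    (fun n _ => 2 * q ^ n)
    (fun n => Continuous.aestronglyMeasurable (by fun_prop))
    (by
      intro n
      refine Filter.Eventually.of_forall fun t _ => ?_
      have hq : 0 ≤ q ^ n := by positivity
      have hd : q ^ n / n ≤ q ^ n := by
        rcases Nat.eq_zero_or_pos n with rfl | hn
        · simp
        · exact div_le_self hq (by exact_mod_cast hn)
      have hd0 : 0 ≤ q ^ n / (n : ℝ) := by positivity
      simp only [norm_mul, Real.norm_eq_abs, abs_of_nonneg hd0]
      have a1 := Real.abs_sin_le_one (n * s)
      have a2 := Real.abs_sin_le_one (n * t)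
      have a3 := Real.abs_sin_le_one t
      calc |(2 : ℝ)| * (q ^ n / n) * |Real.sin (n * s)| * |Real.sin (n * t)| * |Real.sin t|
          ≤ |(2 : ℝ)| * (q ^ n) * 1 * 1 * 1 := by gcongr
        _ = 2 * q ^ n := by simp)
    (Filter.Eventually.of_forall fun t _ =>
      (summable_geometric_of_lt_one h0.le h1).mul_left 2)
    (by simp)
    (Filter.Eventually.of_forall fun t _ => (aux_hasSum q h0 h1 s t).mul_right _)
  have e : ∀ n : ℕ, (∫ t in (0 : ℝ)..π,
      2 * (q ^ n / n) * Real.sin (n * s) * Real.sin (n * t) * Real.sin t)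
      = 2 * (q ^ n / n) * Real.sin (n * s) *
        ∫ t in (0 : ℝ)..π, Real.sin (n * t) * Real.sin t := by
    intro n
    rw [← intervalIntegral.integral_const_mul]
    congr 1; funext t; ring
  have H2 := hasSum_single (f := fun n : ℕ => (∫ t in (0 : ℝ)..π,
      2 * (q ^ n / n) * Real.sin (n * s) * Real.sin (n * t) * Real.sin t)) 1
    (by intro n hn; simp only [e, aux_sin_sin n hn, mul_zero])
  rw [H.unique H2]
  simp only [e]
  have := aux_sin_sq
  simp only [pow_two] at this
  simp only [Nat.cast_one, one_mul, this]
  ring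

lemma aux_first (θ r₁ r₂ : ℝ) (hθ : 0 < θ) (hr₁ : 0 < r₁) (hr₂ : 0 < r₂)
    (h : θ * r₁ * r₂ < 1) :
    semicircleIntegral2
          (fun ζ₁ ζ₂ =>
            ((Real.log (‖
                ((((θ : ℂ))⁻¹ - ζ₁ * ζ₂) / (((θ : ℂ))⁻¹ - ζ₁ * (starRingEnd ℂ) ζ₂))‖) : ℂ)) *
              ((ζ₁.im : ℂ) / ζ₁) * ((ζ₂.im : ℂ) / ζ₂))
          r₁ r₂ = ((-(θ * r₁ ^ 2 * r₂ ^ 2 * π ^ 2 / 2) : ℝ) : ℂ) := by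
  have hq0 : 0 < θ * r₁ * r₂ := by positivity
  have im_eq : ∀ r t : ℝ, ((r : ℂ) * Complex.exp (Complex.I * t)).im = r * Real.sin t := by
    intro r t
    rw [Complex.im_ofReal_mul, mul_comm Complex.I, Complex.exp_ofReal_mul_I_im]
  have ne1 : ∀ x : ℝ, (1 : ℂ) - (θ * r₁ * r₂ : ℝ) * Complex.exp (Complex.I * (x : ℂ)) ≠ 0 := by
    intro x hx
    have h2 := congrArg norm (sub_eq_zero.mp hx)
    rw [norm_mul, mul_comm Complex.I, Complex.norm_exp_ofReal_mul_I, norm_one,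
      Complex.norm_real, Real.norm_eq_abs, abs_of_pos hq0] at h2
    linarith
  have hθc : (θ : ℂ) ≠ 0 := by exact_mod_cast hθ.ne'
  have hr1c : (r₁ : ℂ) ≠ 0 := by exact_mod_cast hr₁.ne'
  have hr2c : (r₂ : ℂ) ≠ 0 := by exact_mod_cast hr₂.ne'
  have pt : ∀ s t : ℝ,
      ((Real.log (‖((((θ : ℂ))⁻¹ - ((r₁ : ℂ) * Complex.exp (Complex.I * s)) *
          ((r₂ : ℂ) * Complex.exp (Complex.I * t))) /
          (((θ : ℂ))⁻¹ - ((r₁ : ℂ) * Complex.exp (Complex.I * s)) *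
            (starRingEnd ℂ) ((r₂ : ℂ) * Complex.exp (Complex.I * t))))‖) : ℂ)) *
        ((((r₁ : ℂ) * Complex.exp (Complex.I * s)).im : ℂ) /
          ((r₁ : ℂ) * Complex.exp (Complex.I * s))) *
        ((((r₂ : ℂ) * Complex.exp (Complex.I * t)).im : ℂ) /
          ((r₂ : ℂ) * Complex.exp (Complex.I * t))) *
        (Complex.I * r₁ * Complex.exp (Complex.I * s)) *
        (Complex.I * r₂ * Complex.exp (Complex.I * t))
      = (((-(r₁ * r₂) * Real.sin s) * ((Real.log ‖(1 : ℂ) - (θ * r₁ * r₂ : ℝ) *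
            Complex.exp (Complex.I * ((s + t : ℝ) : ℂ))‖
        - Real.log ‖(1 : ℂ) - (θ * r₁ * r₂ : ℝ) *
            Complex.exp (Complex.I * ((s - t : ℝ) : ℂ))‖) * Real.sin t) : ℝ) : ℂ) := by
    intro s t
    have hq : ((((θ : ℂ))⁻¹ - ((r₁ : ℂ) * Complex.exp (Complex.I * s)) *
          ((r₂ : ℂ) * Complex.exp (Complex.I * t))) /
          (((θ : ℂ))⁻¹ - ((r₁ : ℂ) * Complex.exp (Complex.I * s)) *
            (starRingEnd ℂ) ((r₂ : ℂ) * Complex.exp (Complex.I * t))))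
        = ((1 : ℂ) - (θ * r₁ * r₂ : ℝ) * Complex.exp (Complex.I * ((s + t : ℝ) : ℂ))) /
          ((1 : ℂ) - (θ * r₁ * r₂ : ℝ) * Complex.exp (Complex.I * ((s - t : ℝ) : ℂ))) := by
      have hc : (starRingEnd ℂ) ((r₂ : ℂ) * Complex.exp (Complex.I * t))
          = r₂ * Complex.exp (-(Complex.I * t)) := by
        rw [map_mul, Complex.conj_ofReal, ← Complex.exp_conj]; simp
      have e1 : Complex.exp (Complex.I * ((s + t : ℝ) : ℂ))
          = Complex.exp (Complex.I * s) * Complex.exp (Complex.I * t) := by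
        rw [← Complex.exp_add]; push_cast; ring_nf
      have e2 : Complex.exp (Complex.I * ((s - t : ℝ) : ℂ))
          = Complex.exp (Complex.I * s) * Complex.exp (-(Complex.I * t)) := by
        rw [← Complex.exp_add]; push_cast; ring_nf
      rw [hc, e1, e2, ← mul_div_mul_left _ _ hθc]
      congr 1
      · rw [mul_sub, mul_inv_cancel₀ hθc]; push_cast; ring
      · rw [mul_sub, mul_inv_cancel₀ hθc]; push_cast; ring
    rw [hq, norm_div, Real.log_div (norm_ne_zero_iff.mpr (ne1 _)) (norm_ne_zero_iff.mpr (ne1 _)),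
      im_eq, im_eq]
    have x1 := Complex.exp_ne_zero (Complex.I * s)
    have x2 := Complex.exp_ne_zero (Complex.I * t)
    generalize Real.log _ - Real.log _ = L
    generalize Complex.exp (Complex.I * s) = E at *
    generalize Complex.exp (Complex.I * t) = F at *
    push_cast
    field_simp
    rw [Complex.I_sq]; ring
  unfold semicircleIntegral2
  simp only [pt]
  simp only [intervalIntegral.integral_ofReal, intervalIntegral.integral_const_mul,
    aux_inner _ hq0 h]
  congr 1
  have : ∀ s : ℝ, -(r₁ * r₂) * Real.sin s * (π * (θ * r₁ * r₂) * Real.sin s)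
      = -(r₁ * r₂) * (π * (θ * r₁ * r₂)) * Real.sin s ^ 2 := by intro s; ring
  simp only [this, intervalIntegral.integral_const_mul, aux_sin_sq]
  ring

lemma aux_second (r₁ r₂ : ℝ) (hr₁ : 0 < r₁) (hr₂ : 0 < r₂) :
    semicircleIntegral2
          (fun ζ₁ ζ₂ => ((ζ₁.im : ℂ) ^ 2 / ζ₁) * ((ζ₂.im : ℂ) ^ 2 / ζ₂))
          r₁ r₂ = ((-(r₁ ^ 2 * r₂ ^ 2 * π ^ 2 / 4) : ℝ) : ℂ) := by
  have im_eq : ∀ r t : ℝ, ((r : ℂ) * Complex.exp (Complex.I * t)).im = r * Real.sin t := by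
    intro r t
    rw [Complex.im_ofReal_mul, mul_comm Complex.I, Complex.exp_ofReal_mul_I_im]
  have hr1c : (r₁ : ℂ) ≠ 0 := by exact_mod_cast hr₁.ne'
  have hr2c : (r₂ : ℂ) ≠ 0 := by exact_mod_cast hr₂.ne'
  have pt : ∀ s t : ℝ,
      ((((r₁ : ℂ) * Complex.exp (Complex.I * s)).im : ℂ) ^ 2 /
          ((r₁ : ℂ) * Complex.exp (Complex.I * s))) *
        ((((r₂ : ℂ) * Complex.exp (Complex.I * t)).im : ℂ) ^ 2 /
          ((r₂ : ℂ) * Complex.exp (Complex.I * t))) *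
        (Complex.I * r₁ * Complex.exp (Complex.I * s)) *
        (Complex.I * r₂ * Complex.exp (Complex.I * t))
      = (((-(r₁ ^ 2 * r₂ ^ 2) * Real.sin s ^ 2) * Real.sin t ^ 2 : ℝ) : ℂ) := by
    intro s t
    rw [im_eq, im_eq]
    have x1 := Complex.exp_ne_zero (Complex.I * s)
    have x2 := Complex.exp_ne_zero (Complex.I * t)
    generalize Complex.exp (Complex.I * s) = E at *
    generalize Complex.exp (Complex.I * t) = F at *
    push_cast
    field_simp
    rw [Complex.I_sq]; ring
  unfold semicircleIntegral2
  simp only [pt]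
  simp only [intervalIntegral.integral_ofReal, intervalIntegral.integral_const_mul,
    intervalIntegral.integral_mul_const, aux_sin_sq]
  congr 1
  ring

/-- The covariance expression of the main theorem for `p₁ = p₂ = 1` evaluates to
`2c₁β⁻¹θμ₁ν₁μ₂ν₂ + (c₂ − 1 − 2β⁻¹c₁)θμ₁ν₁μ₂ν₂`. -/
theorem covariance_formula_p_one
    (μ₁ ν₁ μ₂ ν₂ : ℝ) (hμ₁ : 0 < μ₁) (hν₁ : 0 < ν₁) (hμ₂ : 0 < μ₂) (hν₂ : 0 < ν₂)
    (θ : ℝ) (hθ : 0 < θ) (β c₁ c₂ : ℝ) (hβ : 0 < β)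
    (r₁ r₂ : ℝ) (hr₁ : r₁ = Real.sqrt (μ₁ * ν₁)) (hr₂ : r₂ = Real.sqrt (μ₂ * ν₂))
    (h : θ * r₁ * r₂ < 1) :
    ((4 * c₁ : ℂ) / (β * (Complex.I * π) ^ 2)) *
        semicircleIntegral2
          (fun ζ₁ ζ₂ =>
            ((Real.log (‖
                ((((θ : ℂ))⁻¹ - ζ₁ * ζ₂) / (((θ : ℂ))⁻¹ - ζ₁ * (starRingEnd ℂ) ζ₂))‖) : ℂ)) *
              ((ζ₁.im : ℂ) / ζ₁) * ((ζ₂.im : ℂ) / ζ₂))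
          r₁ r₂ +
      ((4 * (c₂ - 1 - 2 * β⁻¹ * c₁) * θ : ℂ) / (π * Complex.I) ^ 2) *
        semicircleIntegral2
          (fun ζ₁ ζ₂ => ((ζ₁.im : ℂ) ^ 2 / ζ₁) * ((ζ₂.im : ℂ) ^ 2 / ζ₂))
          r₁ r₂ =
      ((2 * c₁ * β⁻¹ * θ * (μ₁ * ν₁ * μ₂ * ν₂)
        + (c₂ - 1 - 2 * β⁻¹ * c₁) * θ * (μ₁ * ν₁ * μ₂ * ν₂) : ℝ) : ℂ) := by
  have p1 : 0 < μ₁ * ν₁ := by positivity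
  have p2 : 0 < μ₂ * ν₂ := by positivity
  have q1 : 0 < r₁ := by rw [hr₁]; exact Real.sqrt_pos.mpr p1
  have q2 : 0 < r₂ := by rw [hr₂]; exact Real.sqrt_pos.mpr p2
  have s1 : r₁ ^ 2 = μ₁ * ν₁ := by rw [hr₁]; exact Real.sq_sqrt p1.le
  have s2 : r₂ ^ 2 = μ₂ * ν₂ := by rw [hr₂]; exact Real.sq_sqrt p2.le
  rw [aux_first θ r₁ r₂ hθ q1 q2 h, aux_second r₁ r₂ q1 q2, s1, s2]
  have hπ : (π : ℂ) ≠ 0 := by exact_mod_cast Real.pi_ne_zero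
  have hβc : (β : ℂ) ≠ 0 := by exact_mod_cast hβ.ne'
  rw [mul_pow, mul_pow, Complex.I_sq]
  push_cast
  field_simp
  ring
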